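/- Let L₁ be a vertex lattice of type 1 in C, i.e. pL₁^∨ ⊂² L₁ ⊂² L₁^∨. Then there exist a vertex lattice L₀ of type 0 (L₀ = L₀^∨) with L₁ ⊆ L₀, and a vertex lattice L₂ of type 2 (L₂ = pL₂^∨) with L₂ ⊆ L₁. -/

import Mathlib

open Pointwise

noncomputable section

variable (p : ℕ) [Fact p.Prime]
variable (C : Type) [AddCommGroup C] [Module ℚ_[p] C]
  [Module ℤ_[p] C] [IsScalarTower ℤ_[p] ℚ_[p] C]
variable (ω : LinearMap.BilinForm ℚ_[p] C)

/-- The dual lattice of a `ℤ_p`-submodule of `C` with respect to `ω`. -/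
def dualL (L : Submodule ℤ_[p] C) : Submodule ℤ_[p] C where
  carrier := {x | ∀ l ∈ L, ω x l ∈ (algebraMap ℤ_[p] ℚ_[p]).range}
  zero_mem' := by
    intro l hl
    exact ⟨0, by simp⟩
  add_mem' := by
    intro x y hx hy l hl
    rw [map_add, LinearMap.add_apply]
    exact add_mem (hx l hl) (hy l hl)
  smul_mem' := by
    intro c x hx l hl
    rw [← algebraMap_smul ℚ_[p] c x, map_smul, LinearMap.smul_apply, smul_eq_mul]
    exact mul_mem ⟨c, rfl⟩ (hx l hl)

/-- `L` is a lattice in `C`: finitely generated over `ℤ_p` and spanning `C`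
over `ℚ_p`. -/
def IsLattice (L : Submodule ℤ_[p] C) : Prop :=
  L.FG ∧ Submodule.span ℚ_[p] (L : Set C) = ⊤

/-- The length of the `ℤ_p`-module `B / A` (as the Krull dimension of its submodule
lattice). -/
def relLength (A B : Submodule ℤ_[p] C) : WithBot ℕ∞ :=
  Order.krullDim (Submodule ℤ_[p] (B ⧸ (A.comap B.subtype)))

/-- `A ⊂ᵈ B` : `A ⊆ B` with colength `d`. -/
def SubD (d : ℕ) (A B : Submodule ℤ_[p] C) : Prop :=
  A ≤ B ∧ relLength p C A B = (d : WithBot ℕ∞)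

/-!
Call a submodule integral if it is contained in its dual. The span of a single vector is integral
for an alternating form, so adjoining to an integral submodule a vector of its dual keeps it
integral; hence a maximal integral submodule is its own dual. One that contains `L₁` lies in
`L₁^∨`, which makes it a lattice, and this is `L₀`. The lattice `L₂` comes from the same statement
for the form `p⁻¹ω`, whose dual is `p` times the dual for `ω`: the dual of `pL₁^∨` for this form is
`L₁^∨^∨ = L₁`, so `pL₁^∨` is integral, and a self-dual lattice containing it is contained in `L₁`.
-/

section DualSubmodule

open LinearMap (BilinForm)

variable {R K V : Type*} [CommRing R] [Field K] [Algebra R K] [AddCommGroup V] [Module R V]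
  [Module K V] [IsScalarTower R K V] {B : BilinForm K V}

lemma dualSubmodule_antitone (B : BilinForm K V) :
    Antitone (B.dualSubmodule : Submodule R V → Submodule R V) :=
  fun _ _ hNM _ hx y hy ↦ hx y (hNM hy)

lemma dualSubmodule_flip_of_isAlt (hB : B.IsAlt) (N : Submodule R V) :
    B.flip.dualSubmodule N = B.dualSubmodule N := by
  ext x
  refine forall₂_congr fun y _ ↦ ?_
  rw [BilinForm.flip_apply, ← hB.neg_eq, neg_mem_iff]

lemma le_dualSubmodule_comm (hB : B.IsAlt) {N M : Submodule R V} :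
    N ≤ B.dualSubmodule M ↔ M ≤ B.dualSubmodule N := by
  rw [← B.le_flip_dualSubmodule, dualSubmodule_flip_of_isAlt hB]

lemma span_singleton_le_dualSubmodule_self (hB : B.IsAlt) (x : V) :
    R ∙ x ≤ B.dualSubmodule (R ∙ x) := by
  rw [Submodule.span_singleton_le_iff_mem]
  intro y hy
  obtain ⟨r, rfl⟩ := Submodule.mem_span_singleton.mp hy
  rw [LinearMap.map_smul_of_tower, hB.self_eq_zero, smul_zero]
  exact zero_mem _

lemma sup_le_dualSubmodule_sup (hB : B.IsAlt) {N M : Submodule R V}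
    (hN : N ≤ B.dualSubmodule N) (hM : M ≤ B.dualSubmodule M) (hMN : M ≤ B.dualSubmodule N) :
    N ⊔ M ≤ B.dualSubmodule (N ⊔ M) := by
  have hsup : N ⊔ M ≤ B.dualSubmodule N := sup_le hN hMN
  have hsup' : N ⊔ M ≤ B.dualSubmodule M := sup_le ((le_dualSubmodule_comm hB).mp hMN) hM
  exact sup_le ((le_dualSubmodule_comm hB).mp hsup) ((le_dualSubmodule_comm hB).mp hsup')

lemma sSup_le_dualSubmodule_sSup_of_isChain (hB : B.IsAlt) {c : Set (Submodule R V)}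
    (hc : IsChain (· ≤ ·) c) (hint : ∀ N ∈ c, N ≤ B.dualSubmodule N) :
    sSup c ≤ B.dualSubmodule (sSup c) := by
  refine sSup_le fun N hN ↦ (le_dualSubmodule_comm hB).mp (sSup_le fun M hM ↦ ?_)
  rcases hc.total hN hM with hNM | hMN
  · exact (hint M hM).trans (dualSubmodule_antitone B hNM)
  · exact hMN.trans (hint N hN)

lemma eq_dualSubmodule_of_maximal (hB : B.IsAlt) {N : Submodule R V}
    (hN : Maximal (fun M ↦ M ≤ B.dualSubmodule M) N) : N = B.dualSubmodule N := by
  refine le_antisymm hN.prop fun x hx ↦ ?_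
  have hint : N ⊔ R ∙ x ≤ B.dualSubmodule (N ⊔ R ∙ x) :=
    sup_le_dualSubmodule_sup hB hN.prop (span_singleton_le_dualSubmodule_self hB x)
      ((Submodule.span_singleton_le_iff_mem _ _).mpr hx)
  exact hN.le_of_ge hint le_sup_left (Submodule.mem_sup_right (Submodule.mem_span_singleton_self x))

lemma exists_eq_dualSubmodule_ge (hB : B.IsAlt) {N : Submodule R V}
    (hN : N ≤ B.dualSubmodule N) : ∃ L : Submodule R V, L = B.dualSubmodule L ∧ N ≤ L := by
  obtain ⟨L, hNL, hL⟩ := zorn_le_nonempty₀ {M : Submodule R V | M ≤ B.dualSubmodule M}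
    (fun c hint hc _ _ ↦
      ⟨sSup c, sSup_le_dualSubmodule_sSup_of_isChain hB hc hint, fun _ ↦ le_sSup⟩) N hN
  exact ⟨L, eq_dualSubmodule_of_maximal hB hL, hNL⟩

lemma mem_units_smul_submodule_iff (c : Kˣ) (N : Submodule R V) (x : V) :
    x ∈ c • N ↔ c⁻¹ • x ∈ N := by
  rw [Units.smul_def, Submodule.mem_smul_pointwise_iff_exists]
  exact ⟨fun ⟨y, hy, hyx⟩ ↦ by rwa [← hyx, ← Units.smul_def, inv_smul_smul],
    fun hx ↦ ⟨_, hx, smul_inv_smul c x⟩⟩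

lemma dualSubmodule_inv_smul_form (B : BilinForm K V) (c : Kˣ) (N : Submodule R V) :
    (c⁻¹ • B).dualSubmodule N = c • B.dualSubmodule N := by
  ext x
  rw [mem_units_smul_submodule_iff]
  refine forall₂_congr fun y _ ↦ ?_
  simp only [Units.smul_def, map_smul, LinearMap.smul_apply]

lemma dualSubmodule_inv_smul_form_smul (B : BilinForm K V) (c : Kˣ) (N : Submodule R V) :
    (c⁻¹ • B).dualSubmodule (c • N) = B.dualSubmodule N := by
  ext x
  simp only [BilinForm.mem_dualSubmodule, Submodule.mem_smul_pointwise_iff_exists,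
    forall_exists_index, and_imp, forall_apply_eq_imp_iff₂, Units.smul_def, map_smul,
    LinearMap.smul_apply, smul_smul, Units.inv_mul, one_smul]

lemma nondegenerate_units_smul (hB : B.Nondegenerate) (c : Kˣ) : (c • B).Nondegenerate :=
  ⟨fun x hx ↦ hB.1 x fun y ↦ (smul_eq_zero_iff_eq c).mp (hx y),
    fun y hy ↦ hB.2 y fun x ↦ (smul_eq_zero_iff_eq c).mp (hy x)⟩

lemma smul_submodule_eq_units_smul {r : R} {c : Kˣ} (hc : algebraMap R K r = c)
    (N : Submodule R V) : r • N = c • N := by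
  ext x
  simp only [Submodule.mem_smul_pointwise_iff_exists, Units.smul_def, ← hc, algebraMap_smul]

section Lattice

variable [IsDomain R] [IsPrincipalIdealRing R] [IsFractionRing R K]

lemma exists_basis_span_range_eq (N : Submodule R V) [Submodule.IsLattice K N] :
    ∃ (n : ℕ) (b : Module.Basis (Fin n) K V), Submodule.span R (Set.range b) = N := by
  have := Submodule.IsLattice.free K N
  let b := Module.finBasis R N
  have hb : ⇑(b.extendOfIsLattice K) = N.subtype ∘ b := funext (b.extendOfIsLattice_apply K)
  refine ⟨_, b.extendOfIsLattice K, ?_⟩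
  rw [hb, Set.range_comp, ← Submodule.map_span, b.span_eq, Submodule.map_subtype_top]

lemma isLattice_dualSubmodule (hnd : B.Nondegenerate) (N : Submodule R V)
    [Submodule.IsLattice K N] : Submodule.IsLattice K (B.dualSubmodule N) := by
  obtain ⟨n, b, rfl⟩ := exists_basis_span_range_eq (K := K) N
  rw [BilinForm.dualSubmodule_span_of_basis B hnd b]
  refine ⟨Submodule.fg_span (Set.finite_range _), ?_⟩
  rw [Submodule.span_span_of_tower, Module.Basis.span_eq]

lemma dualSubmodule_dualSubmodule_of_isAlt (hB : B.IsAlt) (hnd : B.Nondegenerate)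
    (N : Submodule R V) [Submodule.IsLattice K N] :
    B.dualSubmodule (B.dualSubmodule N) = N := by
  obtain ⟨n, b, rfl⟩ := exists_basis_span_range_eq (K := K) N
  rw [← dualSubmodule_flip_of_isAlt hB (Submodule.span R _),
    BilinForm.dualSubmodule_dualSubmodule_flip_of_basis B hnd b]

lemma exists_isLattice_eq_dualSubmodule_ge (hB : B.IsAlt) (hnd : B.Nondegenerate)
    {N : Submodule R V} [Submodule.IsLattice K N] (hN : N ≤ B.dualSubmodule N) :
    ∃ L : Submodule R V, Submodule.IsLattice K L ∧ L = B.dualSubmodule L ∧ N ≤ L := by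
  obtain ⟨L, hL, hNL⟩ := exists_eq_dualSubmodule_ge hB hN
  have hLN : L ≤ B.dualSubmodule N := hL.trans_le (dualSubmodule_antitone B hNL)
  have := isLattice_dualSubmodule hnd N
  have hfg : L.FG :=
    isNoetherian_submodule.mp (isNoetherian_of_isNoetherianRing_of_finite R _) L hLN
  exact ⟨L, .of_le_of_isLattice_of_fg K hNL hfg, hL, hNL⟩

lemma exists_isLattice_eq_smul_dualSubmodule_le (hB : B.IsAlt) (hnd : B.Nondegenerate) (c : Kˣ)
    {N : Submodule R V} [Submodule.IsLattice K N] (hN : c • B.dualSubmodule N ≤ N) :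
    ∃ L : Submodule R V, Submodule.IsLattice K L ∧ L = c • B.dualSubmodule L ∧ L ≤ N := by
  have hB' : (c⁻¹ • B).IsAlt := hB.smul _
  have hnd' : (c⁻¹ • B).Nondegenerate := nondegenerate_units_smul hnd c⁻¹
  have hdual : (c⁻¹ • B).dualSubmodule (c • B.dualSubmodule N) = N := by
    rw [dualSubmodule_inv_smul_form_smul, dualSubmodule_dualSubmodule_of_isAlt hB hnd]
  have := isLattice_dualSubmodule hnd N
  obtain ⟨L, hlat, hL, hNL⟩ :=
    exists_isLattice_eq_dualSubmodule_ge hB' hnd' (hN.trans_eq hdual.symm)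
  refine ⟨L, hlat, hL.trans (dualSubmodule_inv_smul_form B c L), ?_⟩
  calc L = (c⁻¹ • B).dualSubmodule L := hL
    _ ≤ (c⁻¹ • B).dualSubmodule (c • B.dualSubmodule N) := dualSubmodule_antitone _ hNL
    _ = N := hdual

theorem type1_between_type0_and_type2_general (hB : B.IsAlt) (hnd : B.Nondegenerate) (c : Kˣ)
    (N : Submodule R V) [Submodule.IsLattice K N] (hsmul : c • B.dualSubmodule N ≤ N)
    (hint : N ≤ B.dualSubmodule N) :
    (∃ L₀ : Submodule R V, Submodule.IsLattice K L₀ ∧ L₀ = B.dualSubmodule L₀ ∧ N ≤ L₀) ∧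
    (∃ L₂ : Submodule R V, Submodule.IsLattice K L₂ ∧ L₂ = c • B.dualSubmodule L₂ ∧ L₂ ≤ N) :=
  ⟨exists_isLattice_eq_dualSubmodule_ge hB hnd hint,
    exists_isLattice_eq_smul_dualSubmodule_le hB hnd c hsmul⟩

end Lattice

end DualSubmodule

section Padic

variable {p C}

lemma dualL_eq_dualSubmodule (L : Submodule ℤ_[p] C) :
    dualL p C ω L = ω.dualSubmodule L := by
  ext x
  refine forall₂_congr fun y _ ↦ ?_
  rw [Submodule.mem_one, RingHom.mem_range]

lemma isLattice_iff (L : Submodule ℤ_[p] C) :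
    IsLattice p C L ↔ Submodule.IsLattice ℚ_[p] L :=
  ⟨fun h ↦ ⟨h.1, h.2⟩, fun h ↦ ⟨h.fg, h.span_eq_top⟩⟩

end Padic

/-- Let `L₁` be a vertex lattice of type 1 in `C`, i.e.
`pL₁^∨ ⊂² L₁ ⊂² L₁^∨`. Then there exist a vertex lattice `L₀` of type 0
(`L₀ = L₀^∨`) with `L₁ ⊆ L₀`, and a vertex lattice `L₂` of type 2 (`L₂ = pL₂^∨`)
with `L₂ ⊆ L₁`. -/
theorem type1_between_type0_and_type2
    (halt : ω.IsAlt) (hnd : ω.Nondegenerate)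
    (hdim : Module.finrank ℚ_[p] C = 4)
    (L₁ : Submodule ℤ_[p] C) (hlat : IsLattice p C L₁)
    (h1 : SubD p C 2 ((p : ℤ_[p]) • dualL p C ω L₁) L₁)
    (h2 : SubD p C 2 L₁ (dualL p C ω L₁)) :
    (∃ L₀ : Submodule ℤ_[p] C, IsLattice p C L₀ ∧ L₀ = dualL p C ω L₀ ∧ L₁ ≤ L₀) ∧
    (∃ L₂ : Submodule ℤ_[p] C, IsLattice p C L₂ ∧
      L₂ = (p : ℤ_[p]) • dualL p C ω L₂ ∧ L₂ ≤ L₁) := by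
  have hlat' : Submodule.IsLattice ℚ_[p] L₁ := (isLattice_iff L₁).mp hlat
  let c : ℚ_[p]ˣ := Units.mk0 (p : ℚ_[p]) (NeZero.ne _)
  have hc (L : Submodule ℤ_[p] C) : (p : ℤ_[p]) • L = c • L :=
    smul_submodule_eq_units_smul (map_natCast _ p) L
  simp only [SubD, isLattice_iff, dualL_eq_dualSubmodule, hc] at h1 h2 ⊢
  exact type1_between_type0_and_type2_general halt hnd c L₁ h1.1 h2.1

end
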